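/- arXiv:2005.10920 — 3 statements merged into one kernel-verified Lean document; each statement's English description precedes it below -/
import Mathlib

section
/- Let k be a field, let G be a finite subgroup of PGL_2(k), and let a, b ∈ ℙ¹(k) be two points which do not lie in the same G-orbit. Let h ∈ k(x) be the rational function h(x) = ∏_{σ∈G} (x−σ(a))/(x−σ(b)), with the convention that the factor x−c equals the constant 1 whenever c = ∞. Then h is invariant under G: for every τ ∈ G, the rational function h∘τ (obtained by substituting τ(x) for x) equals h. -/
open Polynomial OnePoint

/-- The projective general linear group `PGL₂(k)`, acting on `ℙ¹(k) = k ∪ {∞}`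
by homographies. -/
abbrev PGL2 (k : Type*) [Field k] : Type _ :=
  Matrix.GeneralLinearGroup (Fin 2) k ⧸ Subgroup.center (Matrix.GeneralLinearGroup (Fin 2) k)

open Classical in
/-- Möbius transformation of `ℙ¹(k) = k ∪ {∞}` associated to a 2×2 matrix
`M = !![a, b; c, d]`, sending `z` to `(a * z + b) / (c * z + d)`. -/
noncomputable def Matrix.mobius {k : Type*} [Field k] (M : Matrix (Fin 2) (Fin 2) k) :
    OnePoint k → OnePoint k := fun z =>
  Option.elim z
    (if M 1 0 = 0 then ∞ else ((M 0 0 / M 1 0 : k) : OnePoint k))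
    (fun w => if M 1 0 * w + M 1 1 = 0 then ∞
      else (((M 0 0 * w + M 0 1) / (M 1 0 * w + M 1 1) : k) : OnePoint k))

/-- The action of an element of `PGL₂(k)` on `ℙ¹(k)`, via a representative matrix
(the Möbius transformation does not depend on the chosen representative). -/
noncomputable def PGL2.act {k : Type*} [Field k] (g : PGL2 k) : OnePoint k → OnePoint k :=
  Matrix.mobius ((Quotient.out g : Matrix.GeneralLinearGroup (Fin 2) k) : Matrix (Fin 2) (Fin 2) k)

/-- `a` and `b` lie in the same orbit under the subgroup `G` of `PGL₂(k)`. -/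
def PGL2.SameOrbit {k : Type*} [Field k] (G : Subgroup (PGL2 k)) (a b : OnePoint k) : Prop :=
  ∃ σ ∈ G, PGL2.act σ a = b

/-- The factor `x - c` in `k(x)`, with the convention that it is the constant `1`
when `c = ∞`. -/
noncomputable def OnePoint.ratFactor {k : Type*} [Field k] (c : OnePoint k) : RatFunc k :=
  Option.elim c 1 (fun c₀ => RatFunc.X - RatFunc.C c₀)

/-- The rational function `τ(x) = (a * x + b) / (c * x + d) ∈ k(x)` attached to an element
`τ` of `PGL₂(k)` with representative matrix `!![a, b; c, d]`. -/
noncomputable def PGL2.toRatFunc {k : Type*} [Field k] (g : PGL2 k) : RatFunc k :=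
  letI M := ((Quotient.out g : Matrix.GeneralLinearGroup (Fin 2) k) : Matrix (Fin 2) (Fin 2) k)
  (RatFunc.C (M 0 0) * RatFunc.X + RatFunc.C (M 0 1)) /
    (RatFunc.C (M 1 0) * RatFunc.X + RatFunc.C (M 1 1))

/-- Composition `h ∘ g` of a rational function `h ∈ k(x)` with a rational function
`g ∈ k(x)`, given by substituting `g` for the variable `x` in `h`. -/
noncomputable def RatFunc.comp {k : Type*} [Field k] (h g : RatFunc k) : RatFunc k :=
  RatFunc.eval (RatFunc.C : k →+* RatFunc k) g h

/-!
Writing `L v = v₁ x - v₀` for the linear form that vanishes at the point with homogeneous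
coordinates `v = (v₀, v₁)`, a matrix `g` with bottom row `(c, d)` satisfies
`L (g v) ∘ g = det g / (c x + d) * L v`, and the factor `det g / (c x + d)` does not depend on `v`.
Multiplying over the group, `F v = ∏ σ ∈ G, L (σ v)` satisfies `F v ∘ τ = D * F v` with `D` again
independent of `v`: the product is permuted by left translation, and the scalars by which the chosen
representatives fail to be multiplicative do not depend on `v` either.
As `x - σ(a)` is a constant multiple of `L (σ v)` for any coordinates `v` of `a`, also when
`σ(a) = ∞`, the function `h` is a constant times `F v / F w`, in which `D` cancels.
-/

open Matrix IntermediateField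

section Substitution

variable {k : Type*} [Field k]

/-- Substitution of a rational function `g`, transcendental over `k`, for the variable, as an
endomorphism of `k(x)`. For constant `g` the map `RatFunc.comp · g` is not additive, because of
poles at `g`. -/
noncomputable def substAlgHom (g : RatFunc k) (hg : Transcendental k g) :
    RatFunc k →ₐ[k] RatFunc k :=
  k⟮g⟯.val.comp (RatFunc.algEquivOfTranscendental g hg).toAlgHom

lemma substAlgHom_apply (g : RatFunc k) (hg : Transcendental k g) (h : RatFunc k) :
    substAlgHom g hg h = RatFunc.comp h g := by
  simp [substAlgHom, RatFunc.algEquivOfTranscendental_apply, RatFunc.comp, RatFunc.eval,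
    Polynomial.aeval_def]

lemma substAlgHom_X (g : RatFunc k) (hg : Transcendental k g) :
    substAlgHom g hg RatFunc.X = g := by
  simp [substAlgHom]

end Substitution

section LinForm

variable {k : Type*} [Field k]

/-- The linear form `v₁ x - v₀` in `k(x)`, which vanishes at the point of `ℙ¹(k)` with homogeneous
coordinates `v = (v₀, v₁)`. -/
noncomputable def linForm : (Fin 2 → k) →ₗ[k] RatFunc k where
  toFun v := RatFunc.C (v 1) * RatFunc.X - RatFunc.C (v 0)
  map_add' v w := by simp only [Pi.add_apply, map_add]; ring
  map_smul' c v := by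
    simp only [Pi.smul_apply, smul_eq_mul, map_mul, RatFunc.smul_eq_C_mul, RingHom.id_apply]; ring

lemma linForm_apply (v : Fin 2 → k) :
    linForm v = RatFunc.C (v 1) * RatFunc.X - RatFunc.C (v 0) := rfl

lemma linForm_eq_algebraMap (v : Fin 2 → k) :
    linForm v = algebraMap k[X] (RatFunc k) (C (v 1) * X - C (v 0)) := by
  simp [linForm_apply]

lemma linForm_injective : Function.Injective (linForm (k := k)) := by
  refine (injective_iff_map_eq_zero linForm).2 fun v hv => ?_
  rw [linForm_eq_algebraMap, map_eq_zero_iff _ (RatFunc.algebraMap_injective k)] at hv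
  ext i
  fin_cases i
  · simpa using congrArg (coeff · 0) hv
  · simpa using congrArg (coeff · 1) hv

lemma ratFactor_infty : (∞ : OnePoint k).ratFactor = 1 := rfl

lemma ratFactor_coe (c : k) : (c : OnePoint k).ratFactor = RatFunc.X - RatFunc.C c := rfl

lemma exists_ratFactor_symm_mk_eq_smul_linForm [DecidableEq k] (v : Fin 2 → k) (hv : v ≠ 0) :
    ∃ u : k, ((equivProjectivization k).symm (.mk k v hv)).ratFactor = u • linForm v := by
  rw [equivProjectivization_symm_apply_mk]
  by_cases h1 : v 1 = 0
  · have h0 : v 0 ≠ 0 := fun h0 => hv (by ext i; fin_cases i <;> assumption)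
    refine ⟨-(v 0)⁻¹, ?_⟩
    simp [h1, linForm_apply, ratFactor_infty, RatFunc.smul_eq_C_mul, h0]
  · refine ⟨(v 1)⁻¹, ?_⟩
    simp [h1, linForm_apply, ratFactor_coe, RatFunc.smul_eq_C_mul, mul_sub]

end LinForm

section Mobius

variable {k : Type*} [Field k]

/-- The denominator `c x + d` of the homography with matrix `!![a, b; c, d]`. -/
noncomputable def mobiusDenom (g : GL (Fin 2) k) : RatFunc k :=
  RatFunc.C (g 1 0) * RatFunc.X + RatFunc.C (g 1 1)

/-- The homography `(a x + b) / (c x + d)` with matrix `!![a, b; c, d]`, as an element of `k(x)`. -/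
noncomputable def mobiusFunc (g : GL (Fin 2) k) : RatFunc k :=
  (RatFunc.C (g 0 0) * RatFunc.X + RatFunc.C (g 0 1)) / mobiusDenom g

lemma mobiusDenom_ne_zero (g : GL (Fin 2) k) : mobiusDenom g ≠ 0 := by
  have hdenom : mobiusDenom g = linForm ![-g 1 1, g 1 0] := by
    simp [mobiusDenom, linForm_apply]
  rw [hdenom, map_ne_zero_iff _ linForm_injective]
  intro hrow
  have h11 : g 1 1 = 0 := by simpa using congrFun hrow 0
  have h10 : g 1 0 = 0 := by simpa using congrFun hrow 1
  exact g.det_ne_zero (by rw [det_fin_two, h11, h10]; ring)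

lemma mobiusFunc_mul_mobiusDenom (g : GL (Fin 2) k) :
    mobiusFunc g * mobiusDenom g = RatFunc.C (g 0 0) * RatFunc.X + RatFunc.C (g 0 1) :=
  div_mul_cancel₀ _ (mobiusDenom_ne_zero g)

lemma transcendental_mobiusFunc (g : GL (Fin 2) k) : Transcendental k (mobiusFunc g) := by
  refine RatFunc.transcendental_of_ne_C _ ?_
  rintro ⟨c, hc⟩
  have hform : linForm ![c * g 1 1 - g 0 1, g 0 0 - c * g 1 0] = 0 := by
    have hmul := mobiusFunc_mul_mobiusDenom g
    rw [hc, mobiusDenom] at hmul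
    simp only [linForm_apply, cons_val_zero, cons_val_one, map_sub, map_mul]
    linear_combination -hmul
  have hrows := (map_eq_zero_iff _ linForm_injective).1 hform
  have h1 : c * g 1 1 - g 0 1 = 0 := by simpa using congrFun hrows 0
  have h0 : g 0 0 - c * g 1 0 = 0 := by simpa using congrFun hrows 1
  refine g.det_ne_zero ?_
  rw [det_fin_two]
  linear_combination g 1 1 * h0 + g 1 0 * h1

/-- Substitution of the homography with matrix `g` for the variable, as an endomorphism of
`k(x)`. -/
noncomputable def mobiusAlgHom (g : GL (Fin 2) k) : RatFunc k →ₐ[k] RatFunc k :=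
  substAlgHom (mobiusFunc g) (transcendental_mobiusFunc g)

lemma mobiusAlgHom_linForm_smul (g : GL (Fin 2) k) (v : Fin 2 → k) :
    mobiusAlgHom g (linForm (g • v)) = (g.val.det • (mobiusDenom g)⁻¹) * linForm v := by
  have hC (c : k) : mobiusAlgHom g (RatFunc.C c) = RatFunc.C c := (mobiusAlgHom g).commutes c
  have hX : mobiusAlgHom g RatFunc.X = mobiusFunc g := substAlgHom_X _ _
  have hmul := mobiusFunc_mul_mobiusDenom g
  have hne := mobiusDenom_ne_zero g
  rw [RatFunc.smul_eq_C_mul, mul_right_comm, ← div_eq_mul_inv, eq_div_iff hne]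
  simp only [GeneralLinearGroup.fin_two_smul, linForm_apply, det_fin_two, cons_val_zero,
    cons_val_one, map_sub, map_add, map_mul, hC, hX]
  rw [sub_mul, mul_assoc, hmul, mobiusDenom]
  ring

end Mobius

section Action

lemma exists_out_mul_eq_scalar_mul {n R : Type*} [Fintype n] [DecidableEq n] [CommRing R]
    (σ τ : GL n R ⧸ Subgroup.center (GL n R)) :
    ∃ c : Rˣ, Quotient.out (σ * τ) =
      GeneralLinearGroup.scalar n c * (Quotient.out σ * Quotient.out τ) := by
  obtain ⟨z, hz⟩ := QuotientGroup.mk_out_eq_mul (Subgroup.center (GL n R))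
    (Quotient.out σ * Quotient.out τ)
  rw [QuotientGroup.mk_mul, QuotientGroup.out_eq', QuotientGroup.out_eq',
    Subgroup.mem_center_iff.1 z.2] at hz
  obtain ⟨c, hc⟩ := GeneralLinearGroup.center_eq_range_scalar.le z.2
  exact ⟨c, by rw [hc, hz]⟩

lemma scalar_smul_eq_smul {n R : Type*} [Fintype n] [DecidableEq n] [CommRing R]
    (c : Rˣ) (v : n → R) : GeneralLinearGroup.scalar n c • v = (c : R) • v := by
  ext i
  simp [Units.smul_def]

variable {k : Type*} [Field k]

lemma mobius_infty [DecidableEq k] (M : Matrix (Fin 2) (Fin 2) k) :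
    M.mobius ∞ = if M 1 0 = 0 then ∞ else ((M 0 0 / M 1 0 : k) : OnePoint k) := by
  split_ifs with h
  exacts [if_pos h, if_neg h]

lemma mobius_coe [DecidableEq k] (M : Matrix (Fin 2) (Fin 2) k) (x : k) :
    M.mobius x = if M 1 0 * x + M 1 1 = 0 then ∞
      else (((M 0 0 * x + M 0 1) / (M 1 0 * x + M 1 1) : k) : OnePoint k) := by
  split_ifs with h
  exacts [if_pos h, if_neg h]

lemma act_eq_out_smul [DecidableEq k] (σ : PGL2 k) (c : OnePoint k) :
    PGL2.act σ c = (Quotient.out σ : GL (Fin 2) k) • c := by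
  cases c with
  | infty => rw [smul_infty_eq_ite, PGL2.act, mobius_infty]
  | coe x => rw [smul_some_eq_ite, PGL2.act, mobius_coe]

lemma mobiusAlgHom_out_apply (τ : PGL2 k) (h : RatFunc k) :
    mobiusAlgHom (Quotient.out τ) h = RatFunc.comp h (PGL2.toRatFunc τ) :=
  substAlgHom_apply _ _ h

lemma exists_ratFactor_act_eq_smul_linForm [DecidableEq k] (σ : PGL2 k) (c : OnePoint k) :
    ∃ u : k, (PGL2.act σ c).ratFactor =
      u • linForm ((Quotient.out σ : GL (Fin 2) k) • (equivProjectivization k c).rep) := by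
  set v := (equivProjectivization k c).rep
  have hv0 : v ≠ 0 := Projectivization.rep_nonzero _
  have hc : equivProjectivization k c = .mk k v hv0 := (Projectivization.mk_rep _).symm
  have hact : PGL2.act σ c = (equivProjectivization k).symm
      (.mk k ((Quotient.out σ : GL (Fin 2) k) • v) ((smul_ne_zero_iff_ne _).2 hv0)) := by
    rw [act_eq_out_smul, Equiv.eq_symm_apply, equivProjectivization_smul, hc,
      Projectivization.smul_mk]
  rw [hact]
  exact exists_ratFactor_symm_mk_eq_smul_linForm _ _

lemma exists_mobiusAlgHom_linForm_out_mul_smul (τ ρ : PGL2 k) :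
    ∃ D : RatFunc k, D ≠ 0 ∧ ∀ v : Fin 2 → k,
      mobiusAlgHom (Quotient.out τ) (linForm ((Quotient.out (τ * ρ) : GL (Fin 2) k) • v)) =
        D * linForm ((Quotient.out ρ : GL (Fin 2) k) • v) := by
  obtain ⟨c, hc⟩ := exists_out_mul_eq_scalar_mul τ ρ
  set g : GL (Fin 2) k := Quotient.out τ
  refine ⟨(c : k) • g.val.det • (mobiusDenom g)⁻¹, ?_, fun v => ?_⟩
  · exact smul_ne_zero c.ne_zero
      (smul_ne_zero g.det_ne_zero (inv_ne_zero (mobiusDenom_ne_zero g)))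
  · rw [hc, mul_smul, mul_smul, scalar_smul_eq_smul, _root_.map_smul, _root_.map_smul,
      mobiusAlgHom_linForm_smul, ← smul_mul_assoc]

end Action

section OrbitForm

variable {k : Type*} [Field k] (G : Subgroup (PGL2 k)) [Fintype G]

/-- The product of the linear forms of the translates `σ v`, `σ ∈ G`, where `σ` acts on `k²` through
its chosen representative in `GL₂(k)`; a different choice changes the product by a constant. -/
noncomputable def orbitForm (v : Fin 2 → k) : RatFunc k :=
  ∏ σ : G, linForm ((Quotient.out (σ : PGL2 k) : GL (Fin 2) k) • v)

lemma exists_prod_ratFactor_act_eq_smul_orbitForm [DecidableEq k] (c : OnePoint k) :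
    ∃ u : k, ∏ σ : G, (PGL2.act (σ : PGL2 k) c).ratFactor =
      u • orbitForm G (equivProjectivization k c).rep := by
  choose u hu using fun σ : G => exists_ratFactor_act_eq_smul_linForm (σ : PGL2 k) c
  exact ⟨∏ σ, u σ, by simp only [hu, orbitForm, Finset.prod_smul]⟩

variable {G} in
lemma exists_mobiusAlgHom_orbitForm {τ : PGL2 k} (hτ : τ ∈ G) :
    ∃ D : RatFunc k, D ≠ 0 ∧ ∀ v : Fin 2 → k,
      mobiusAlgHom (Quotient.out τ) (orbitForm G v) = D * orbitForm G v := by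
  choose D hD hmap using fun ρ : G => exists_mobiusAlgHom_linForm_out_mul_smul τ (ρ : PGL2 k)
  refine ⟨∏ ρ, D ρ, Finset.prod_ne_zero_iff.2 fun ρ _ => hD ρ, fun v => ?_⟩
  have htranslate : orbitForm G v =
      ∏ ρ : G, linForm ((Quotient.out (τ * ρ : PGL2 k) : GL (Fin 2) k) • v) :=
    (Equiv.prod_comp (Equiv.mulLeft (⟨τ, hτ⟩ : G)) _).symm
  calc mobiusAlgHom (Quotient.out τ) (orbitForm G v)
      = ∏ ρ : G, D ρ * linForm ((Quotient.out (ρ : PGL2 k) : GL (Fin 2) k) • v) := by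
        simp only [htranslate, map_prod, hmap]
    _ = (∏ ρ, D ρ) * orbitForm G v := Finset.prod_mul_distrib

end OrbitForm

/-- **`G`-invariance of the cover.**
Let `G` be a finite subgroup of `PGL₂(k)` and let `a, b ∈ ℙ¹(k)` be points not lying in the
same `G`-orbit.  Let `h = ∏_{σ ∈ G} (x - σ(a)) / (x - σ(b))` (with the convention that a
factor `x - c` is `1` when `c = ∞`).  Then `h` is invariant under `G`: for every `τ ∈ G`,
the rational function `h ∘ τ`, obtained by substituting `τ(x)` for `x`, equals `h`. -/
theorem cover_function_is_G_invariant
    (k : Type*) [Field k] (G : Subgroup (PGL2 k)) [Fintype G] (a b : OnePoint k)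
    (hab : ¬ PGL2.SameOrbit G a b)
    (h : RatFunc k)
    (hdef : h = ∏ σ : G, (OnePoint.ratFactor (PGL2.act (σ : PGL2 k) a) /
      OnePoint.ratFactor (PGL2.act (σ : PGL2 k) b))) :
    ∀ τ ∈ G, RatFunc.comp h (PGL2.toRatFunc τ) = h := by
  classical
  intro τ hτ
  obtain ⟨u, hu⟩ := exists_prod_ratFactor_act_eq_smul_orbitForm G a
  obtain ⟨w, hw⟩ := exists_prod_ratFactor_act_eq_smul_orbitForm G b
  obtain ⟨D, hD, hmap⟩ := exists_mobiusAlgHom_orbitForm hτ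
  set F := orbitForm G (equivProjectivization k a).rep
  set E := orbitForm G (equivProjectivization k b).rep
  have hh : h = (u • F) / (w • E) := by rw [hdef, Finset.prod_div_distrib, hu, hw]
  calc RatFunc.comp h (PGL2.toRatFunc τ)
      = mobiusAlgHom (Quotient.out τ) h := (mobiusAlgHom_out_apply τ h).symm
    _ = (u • (D * F)) / (w • (D * E)) := by
        rw [hh, map_div₀, _root_.map_smul, _root_.map_smul, hmap, hmap]
    _ = h := by rw [hh, ← mul_smul_comm, ← mul_smul_comm, mul_div_mul_left _ _ hD]
end

section
/- Let k be a number field, let G be a finite subgroup of PGL_2(k), and let a, b ∈ ℙ¹(k) be two points which do not lie in the same G-orbit. Consider the polynomial R_t = ∏_{σ∈G}(x−σ(a)) − t·∏_{σ∈G}(x−σ(b)) in k(t)[x], with the convention that the factor x−c equals the constant 1 whenever c = ∞. Then there exists a thin subset T of k such that for every m ∈ k with m ∉ T, the specialized polynomial R_m ∈ k[x] is irreducible over k, and its splitting field is a Galois extension of k whose Galois group is isomorphic to G. -/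
open Polynomial OnePoint

/-- The polynomial factor `x - c` in `k[x]`, with the convention that it is the constant `1`
when `c = ∞`. -/
noncomputable def OnePoint.polyFactor {k : Type*} [Field k] (c : OnePoint k) : Polynomial k :=
  Option.elim c 1 (fun c₀ => Polynomial.X - Polynomial.C c₀)

/-- A thin subset of `k`, in the sense of Serre: a set contained in the union of a finite
set and finitely many value sets `{m ∈ k | P(m, x) has a root x ∈ k}`, where each
`P(t, x) ∈ k[t][x]` is irreducible over `k(t)` of degree at least `2` in `x`. -/
def IsThin {k : Type*} [Field k] (T : Set k) : Prop :=
  ∃ (s : Finset (Polynomial (Polynomial k))) (F : Set k), F.Finite ∧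
    (∀ P ∈ s, Irreducible (P.map (algebraMap (Polynomial k) (RatFunc k))) ∧ 2 ≤ P.natDegree) ∧
    T ⊆ F ∪ ⋃ P ∈ s, {m : k | ∃ x : k, ((P.map (Polynomial.evalRingHom m)).eval x = 0)}

/-! The roots of `R_m` form the fibre above `m` of the quotient map `ℙ¹ → ℙ¹/G`, which the ratio of
the orbit polynomials of `a` and `b` turns into a rational function of degree `|G|`. On an
unramified fibre `G` acts simply transitively, and this action commutes with that of the Galois
group; a root `θ` therefore embeds the Galois group into `G`. If the image lay in a proper subgroup
`H`, the image of `θ` under the quotient map `ℙ¹ → ℙ¹/H` would be Galois-invariant, hence rational.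
As this map has degree `|H| < |G|`, it is not a rational function of the quotient by `G`, so its
minimal polynomial over the field which the latter generates has degree at least `2`, and it takes a
rational value above `m` only for `m` in a thin set. -/

namespace IsThin

variable {k : Type*} [Field k]

lemma of_finite {T : Set k} (hT : T.Finite) : IsThin T :=
  ⟨∅, T, hT, by simp, by simp⟩

lemma mono {S T : Set k} (hT : IsThin T) (h : S ⊆ T) : IsThin S :=
  let ⟨s, F, hF, hs, hTs⟩ := hT
  ⟨s, F, hF, hs, h.trans hTs⟩

lemma union {S T : Set k} (hS : IsThin S) (hT : IsThin T) : IsThin (S ∪ T) := by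
  classical
  obtain ⟨s, F, hF, hs, hSs⟩ := hS
  obtain ⟨t, E, hE, ht, hTt⟩ := hT
  refine ⟨s ∪ t, F ∪ E, hF.union hE, fun P hP => (Finset.mem_union.mp hP).elim (hs P) (ht P), ?_⟩
  rw [Finset.set_biUnion_union, Set.union_union_union_comm]
  exact Set.union_subset_union hSs hTt

lemma biUnion {ι : Type*} {I : Set ι} (hI : I.Finite) {T : ι → Set k}
    (hT : ∀ i ∈ I, IsThin (T i)) : IsThin (⋃ i ∈ I, T i) := by
  induction I, hI using Set.Finite.induction_on with
  | empty => simpa using of_finite Set.finite_empty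
  | insert _ _ ih =>
    rw [Set.biUnion_insert]
    exact (hT _ (Set.mem_insert _ _)).union (ih fun i hi => hT i (Set.mem_insert_of_mem _ hi))

lemma of_irreducible {P : k[X][X]} (hP : Irreducible (P.map (algebraMap k[X] (RatFunc k))))
    (hdeg : 2 ≤ P.natDegree) : IsThin {m : k | ∃ x, (P.map (evalRingHom m)).eval x = 0} :=
  ⟨{P}, ∅, Set.finite_empty, by simpa using ⟨hP, hdeg⟩, by simp⟩

end IsThin

section RationalFunctions

lemma exists_irreducible_map_eval₂_eq_zero {R F K : Type*} [CommRing R] [IsDomain R] [Field F]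
    [Algebra R F] [IsFractionRing R F] [Field K] (g : F →+* K) {h : K} (hint : g.IsIntegralElem h)
    (hh : h ∉ g.range) :
    ∃ P : R[X], Irreducible (P.map (algebraMap R F)) ∧ 2 ≤ P.natDegree ∧
      eval₂ (g.comp (algebraMap R F)) h P = 0 := by
  algebraize [g]
  have hirr : Irreducible (minpoly F h) := minpoly.irreducible hint
  obtain ⟨c, hc, hP⟩ := IsLocalization.integerNormalization_spec (nonZeroDivisors R) (minpoly F h)
  have hc0 : algebraMap R F c ≠ 0 := IsFractionRing.to_map_ne_zero_of_mem_nonZeroDivisors hc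
  rw [← IsScalarTower.algebraMap_smul F c, smul_eq_C_mul] at hP
  refine ⟨IsLocalization.integerNormalization (nonZeroDivisors R) (minpoly F h), ?_, ?_,
    IsLocalization.integerNormalization_eval₂_eq_zero _ g _ (minpoly.aeval F h)⟩
  · rw [hP]
    exact (irreducible_isUnit_mul (isUnit_C.mpr hc0.isUnit)).mpr hirr
  · rw [← natDegree_map_eq_of_injective (IsFractionRing.injective R F), hP, natDegree_C_mul hc0]
    exact (minpoly.two_le_natDegree_iff hint).mpr hh

variable {k : Type*} [Field k]

open IntermediateField in
lemma exists_irreducible_aevalAeval_eq_zero {f h : RatFunc k} (hf : ¬ ∃ c, f = RatFunc.C c)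
    (hh : h ∉ k⟮f⟯) :
    ∃ P : k[X][X], Irreducible (P.map (algebraMap k[X] (RatFunc k))) ∧ 2 ≤ P.natDegree ∧
      aevalAeval f h P = 0 := by
  let e := RatFunc.algEquivOfTranscendental f (f.transcendental_of_ne_C hf)
  let g : RatFunc k →ₐ[k] RatFunc k := k⟮f⟯.val.comp e
  have hint : g.toRingHom.IsIntegralElem h := by
    obtain ⟨p, hp, hp0⟩ := ((RatFunc.isAlgebraic_adjoin_simple_X' f hf).isAlgebraic h).isIntegral
    refine ⟨p.map e.symm.toRingHom, hp.map _, ?_⟩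
    rw [eval₂_map, ← hp0]
    congr 1
    ext x
    simp [g]
  have hrange : h ∉ g.toRingHom.range := by
    rintro ⟨u, rfl⟩
    exact hh (e u).2
  obtain ⟨P, hirr, hdeg, hP⟩ :=
    exists_irreducible_map_eval₂_eq_zero (R := k[X]) g.toRingHom hint hrange
  refine ⟨P, hirr, hdeg, ?_⟩
  have hg : (eval₂RingHom (g.toRingHom.comp (algebraMap k[X] (RatFunc k))) h) =
      (aevalAeval f h).toRingHom := by
    ext x
    · simpa using g.commutes x
    · simp [g, e]
    · simp
  rw [← hP]
  exact (RingHom.congr_fun hg P).symm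

lemma map_aevalAeval {R S T : Type*} [CommRing R] [CommRing S] [CommRing T] [Algebra R S]
    [Algebra R T] (φ : S →ₐ[R] T) (x y : S) (P : R[X][X]) :
    φ (aevalAeval x y P) = aevalAeval (φ x) (φ y) P := by
  rw [← AlgHom.comp_apply]
  congr 1
  ext <;> simp

lemma liftAlgHom_mk_eq_div {R S K : Type*} [CommRing R] [CommRing S] [Algebra R S] [Field K]
    [Algebra R K] {M : Submonoid S} {χ : S →ₐ[R] K} (hχ : ∀ y : M, IsUnit (χ y)) (x : S) (y : M) :
    (IsLocalization.liftAlgHom hχ : Localization M →ₐ[R] K) (.mk x y) = χ x / χ y := by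
  rw [IsLocalization.liftAlgHom_apply, Localization.mk_eq_mk', IsLocalization.lift_mk'_spec]
  exact (mul_div_cancel₀ _ (hχ y).ne_zero).symm

lemma aevalAeval_div_eq_zero {L : Type*} [Field L] [Algebra k L] {A B A' B' : k[X]} {P : k[X][X]}
    (hP : aevalAeval (algebraMap k[X] (RatFunc k) A / algebraMap k[X] (RatFunc k) B)
      (algebraMap k[X] (RatFunc k) A' / algebraMap k[X] (RatFunc k) B') P = 0) {θ : L}
    (hB : aeval θ B ≠ 0) (hB' : aeval θ B' ≠ 0) :
    aevalAeval (aeval θ A / aeval θ B) (aeval θ A' / aeval θ B') P = 0 := by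
  let M : Submonoid k[X] := (nonZeroDivisors L).comap (aeval θ : k[X] →ₐ[k] L)
  have hM : M ≤ nonZeroDivisors k[X] := fun Q hQ =>
    mem_nonZeroDivisors_of_ne_zero fun h => by simp [M, h] at hQ
  have hunit (Q : M) : IsUnit (Algebra.algHom k k[X] (RatFunc k) Q) :=
    (IsFractionRing.to_map_ne_zero_of_mem_nonZeroDivisors (hM Q.2)).isUnit
  let ψ : Localization M →ₐ[k] RatFunc k := IsLocalization.liftAlgHom hunit
  have hψ : Function.Injective ψ :=
    (IsLocalization.lift_injective_iff _).mpr fun x y => by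
      rw [(IsLocalization.injective _ hM).eq_iff]
      exact (IsFractionRing.injective k[X] (RatFunc k)).eq_iff.symm
  let φ : Localization M →ₐ[k] L :=
    IsLocalization.liftAlgHom (f := aeval θ) fun Q : M => (nonZeroDivisors.ne_zero Q.2).isUnit
  let u : Localization M := .mk A ⟨B, mem_nonZeroDivisors_of_ne_zero hB⟩
  let v : Localization M := .mk A' ⟨B', mem_nonZeroDivisors_of_ne_zero hB'⟩
  have huv : aevalAeval u v P = 0 := hψ <| by
    rw [map_zero, map_aevalAeval, ← hP, liftAlgHom_mk_eq_div, liftAlgHom_mk_eq_div]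
    rfl
  have hφ : φ (aevalAeval u v P) = 0 := by rw [huv, map_zero]
  rwa [map_aevalAeval, liftAlgHom_mk_eq_div, liftAlgHom_mk_eq_div] at hφ

lemma max_natDegree_num_denom_div {A B : k[X]} (h : IsCoprime A B) :
    max (algebraMap k[X] (RatFunc k) A / algebraMap k[X] (RatFunc k) B).num.natDegree
      (algebraMap k[X] (RatFunc k) A / algebraMap k[X] (RatFunc k) B).denom.natDegree =
      max A.natDegree B.natDegree := by
  obtain rfl | hB := eq_or_ne B 0
  · simp [natDegree_eq_zero_of_isUnit (isCoprime_zero_right.mp h)]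
  set f := algebraMap k[X] (RatFunc k) A / algebraMap k[X] (RatFunc k) B
  have hcross : f.num * B = A * f.denom := (RatFunc.num_mul_eq_mul_denom_iff hB).mpr rfl
  have hA : Associated f.num A := associated_of_dvd_dvd (RatFunc.num_div_dvd _ hB)
    (h.dvd_of_dvd_mul_right <| hcross ▸ dvd_mul_right A _)
  have hB : Associated f.denom B := associated_of_dvd_dvd (RatFunc.denom_div_dvd _ _)
    (h.symm.dvd_of_dvd_mul_left <| hcross ▸ dvd_mul_left B _)
  rw [natDegree_eq_of_degree_eq (degree_eq_degree_of_associated hA),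
    natDegree_eq_of_degree_eq (degree_eq_degree_of_associated hB)]

open IntermediateField in
lemma div_notMem_adjoin_div {A B A' B' : k[X]} (h : IsCoprime A B) (h' : IsCoprime A' B')
    (hpos : 0 < max A'.natDegree B'.natDegree)
    (hlt : max A'.natDegree B'.natDegree < max A.natDegree B.natDegree) :
    algebraMap k[X] (RatFunc k) A' / algebraMap k[X] (RatFunc k) B' ∉
      k⟮algebraMap k[X] (RatFunc k) A / algebraMap k[X] (RatFunc k) B⟯ := by
  intro hmem
  have hdvd := finrank_dvd_of_le_left (adjoin_simple_le_iff.mpr hmem)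
  rw [RatFunc.finrank_eq_max_natDegree, RatFunc.finrank_eq_max_natDegree,
    max_natDegree_num_denom_div h, max_natDegree_num_denom_div h'] at hdvd
  exact (Nat.le_of_dvd hpos hdvd).not_gt hlt

lemma IsThin.setOf_exists_div_eq {L : Type*} [Field L] [Algebra k L] {A B A' B' : k[X]}
    (h : IsCoprime A B) (h' : IsCoprime A' B') (hpos : 0 < max A'.natDegree B'.natDegree)
    (hlt : max A'.natDegree B'.natDegree < max A.natDegree B.natDegree) :
    IsThin {m : k | ∃ θ : L, aeval θ B ≠ 0 ∧ aeval θ B' ≠ 0 ∧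
      aeval θ A / aeval θ B = algebraMap k L m ∧
      aeval θ A' / aeval θ B' ∈ Set.range (algebraMap k L)} := by
  have hconst : ¬ ∃ c, algebraMap k[X] (RatFunc k) A / algebraMap k[X] (RatFunc k) B =
      RatFunc.C c := by
    rw [RatFunc.eq_C_iff, ← Nat.max_eq_zero_iff, max_natDegree_num_denom_div h]
    exact (hpos.trans hlt).ne'
  obtain ⟨P, hirr, hdeg, hP⟩ :=
    exists_irreducible_aevalAeval_eq_zero hconst (div_notMem_adjoin_div h h' hpos hlt)
  refine (of_irreducible hirr hdeg).mono ?_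
  rintro m ⟨θ, hB, hB', hm, u, hu⟩
  refine ⟨u, (algebraMap k L).injective ?_⟩
  have hPθ := aevalAeval_div_eq_zero hP hB hB'
  rw [hm, ← hu] at hPθ
  rw [map_zero, ← hPθ, map_evalRingHom_eval, ← coe_aevalAeval_eq_evalEval]
  exact map_aevalAeval (Algebra.ofId k L) m u P

end RationalFunctions

section GaloisAction

lemma irreducible_of_transitive {k L : Type*} [Field k] [Field L] [Algebra k L] {p : k[X]}
    (hp : p ≠ 0) {θ : L} (hθ : aeval θ p = 0) (hcard : (p.rootSet L).ncard = p.natDegree)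
    (htrans : ∀ z ∈ p.rootSet L, ∃ g : Gal(L/k), g θ = z) : Irreducible p := by
  have hint : IsIntegral k θ := IsAlgebraic.isIntegral ⟨p, hp, hθ⟩
  have hsub : p.rootSet L ⊆ (minpoly k θ).rootSet L := fun z hz => by
    obtain ⟨g, rfl⟩ := htrans z hz
    rw [mem_rootSet, ← minpoly.algEquiv_eq g θ]
    exact ⟨minpoly.ne_zero (hint.map g), minpoly.aeval k (g θ)⟩
  have hdeg : p.natDegree ≤ (minpoly k θ).natDegree :=
    hcard ▸ (Set.ncard_le_ncard hsub (rootSet_finite _ _)).trans (ncard_rootSet_le _ _)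
  exact (associated_of_dvd_of_natDegree_le (minpoly.dvd k θ hθ) hp hdeg).irreducible
    (minpoly.irreducible hint)

lemma exists_monoidHom_of_smul_mem_orbit {A Γ X : Type*} [Group A] [Group Γ] [MulAction A X]
    [MulAction Γ X] [SMulCommClass A Γ X] {x : X} (hx : MulAction.stabilizer Γ x = ⊥)
    (h : ∀ g : A, g • x ∈ MulAction.orbit Γ x) : ∃ ψ : A →* Γ, ∀ g, g • x = (ψ g)⁻¹ • x := by
  choose s hs using h
  refine ⟨MonoidHom.mk' (fun g => (s g)⁻¹) fun g g' => ?_, fun g => by simp [← hs g]⟩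
  rw [← mul_inv_rev, inv_inj, ← inv_mul_eq_one, ← Subgroup.mem_bot, ← hx,
    MulAction.mem_stabilizer_iff, mul_smul, inv_smul_eq_iff]
  simp only [hs, mul_smul, ← smul_comm g]

end GaloisAction

namespace PGL2

variable {k : Type*} [Field k] (L : Type*) [Field L] [Algebra k L]

open scoped Classical in
/-- The action of `PGL₂(k)` on `ℙ¹(L)`, for an extension `L` of `k`. -/
noncomputable def toPerm : PGL2 k →* Equiv.Perm (OnePoint L) :=
  QuotientGroup.lift _
    ((MulAction.toPermHom (GL (Fin 2) L) (OnePoint L)).comp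
      (Matrix.GeneralLinearGroup.map (algebraMap k L))) fun g hg => by
    obtain ⟨c, hc⟩ := Matrix.GeneralLinearGroup.mem_center_iff_val_mem_range_scalar.mp hg
    have hc0 : c ≠ 0 := by
      rintro rfl
      exact g.ne_zero (by simp [← hc])
    have h00 : g 0 0 = c := by simp [← hc]
    have h11 : g 1 1 = c := by simp [← hc]
    have h01 : g 0 1 = 0 := by simp [← hc]
    have h10 : g 1 0 = 0 := by simp [← hc]
    ext P
    cases P <;> simp [smul_infty_eq_ite, smul_some_eq_ite, h00, h11, h01, h10, hc0]

noncomputable instance : MulAction (PGL2 k) (OnePoint L) :=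
  MulAction.compHom _ (toPerm L)

variable {L}

open scoped Classical in
lemma mk_smul (g : GL (Fin 2) k) (P : OnePoint L) :
    (g : PGL2 k) • P = g.map (algebraMap k L) • P :=
  rfl

open scoped Classical in
lemma out_smul (σ : PGL2 k) (P : OnePoint L) :
    (Quotient.out σ).map (algebraMap k L) • P = σ • P := by
  rw [← mk_smul, QuotientGroup.out_eq']

open scoped Classical in
lemma map_smul {L' : Type*} [Field L'] [Algebra k L'] (f : L →ₐ[k] L') (σ : PGL2 k)
    (P : OnePoint L) : OnePoint.map f (σ • P) = σ • OnePoint.map f P := by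
  rw [← out_smul, ← out_smul]
  refine (OnePoint.map_smul (f : L →+* L') _ P).trans ?_
  congr 1
  ext
  simp

open scoped Classical in
lemma act_eq_smul (σ : PGL2 k) (P : OnePoint k) : act σ P = σ • P := by
  rw [← out_smul]
  cases P with
  | infty => exact (smul_infty_eq_ite ((Quotient.out σ).map (algebraMap k k))).symm
  | coe c => exact (smul_some_eq_ite (g := (Quotient.out σ).map (algebraMap k k))).symm

lemma sameOrbit_iff {G : Subgroup (PGL2 k)} {a b : OnePoint k} :
    SameOrbit G a b ↔ b ∈ MulAction.orbit G a := by
  simp [SameOrbit, act_eq_smul, MulAction.mem_orbit_iff, Subgroup.smul_def]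

lemma fixpointPolynomial_out_ne_zero {σ : PGL2 k} (hσ : σ ≠ 1) :
    (Quotient.out σ).fixpointPolynomial ≠ 0 := by
  rwa [Ne, Matrix.GeneralLinearGroup.fixpointPolynomial_eq_zero_iff,
    ← Matrix.GeneralLinearGroup.mem_center_iff_val_mem_range_scalar, ← QuotientGroup.eq_one_iff,
    QuotientGroup.out_eq']

open scoped Classical in
lemma finite_setOf_smul_eq {σ : PGL2 k} (hσ : σ ≠ 1) :
    {P : OnePoint L | σ • P = P}.Finite := by
  refine (((rootSet_finite (Quotient.out σ).fixpointPolynomial L).image (↑)).insert ∞).subset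
    fun P hP => ?_
  cases P with
  | infty => exact Set.mem_insert _ _
  | coe c =>
    have hc : (Quotient.out σ).map (algebraMap k L) • (c : OnePoint L) = c :=
      (out_smul σ _).trans hP
    rw [← Matrix.GeneralLinearGroup.fixpointPolynomial_aeval_eq_zero_iff] at hc
    refine .inr ⟨c, mem_rootSet.mpr ⟨fixpointPolynomial_out_ne_zero hσ, ?_⟩, rfl⟩
    simpa [Matrix.GeneralLinearGroup.fixpointPolynomial] using hc

/-- The point of `ℙ¹(L)` given by a point of `ℙ¹(k)`. -/
def baseChange (L : Type*) [Field L] [Algebra k L] (a : OnePoint k) : OnePoint L :=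
  OnePoint.map (Algebra.ofId k L) a

lemma smul_baseChange (σ : PGL2 k) (a : OnePoint k) :
    σ • baseChange L a = baseChange L (σ • a) :=
  (map_smul (Algebra.ofId k L) σ a).symm

lemma map_baseChange {L' : Type*} [Field L'] [Algebra k L'] (f : L →ₐ[k] L') (a : OnePoint k) :
    OnePoint.map f (baseChange L a) = baseChange L' a := by
  cases a <;> simp [baseChange]

lemma baseChange_mem_orbit_iff {G : Subgroup (PGL2 k)} {a b : OnePoint k} :
    baseChange L b ∈ MulAction.orbit G (baseChange L a) ↔ b ∈ MulAction.orbit G a := by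
  simp only [MulAction.mem_orbit_iff, Subgroup.smul_def, smul_baseChange]
  exact exists_congr fun _ => (Option.map_injective (Algebra.ofId k L).injective).eq_iff

lemma exists_smul_eq_of_mk_eq {g h : GL (Fin 2) k} (hgh : (g : PGL2 k) = h) :
    ∃ c : L, c ≠ 0 ∧ ∀ v : Fin 2 → L,
      h.map (algebraMap k L) • v = c • g.map (algebraMap k L) • v := by
  obtain ⟨c, hc⟩ := Matrix.GeneralLinearGroup.mem_center_iff_val_mem_range_scalar.mp
    (QuotientGroup.eq.mp hgh)
  have hval : (h : Matrix (Fin 2) (Fin 2) k) = c • (g : Matrix (Fin 2) (Fin 2) k) := by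
    rw [← mul_inv_cancel_left g h, Units.val_mul, ← hc]
    ext i j
    simp [Matrix.scalar_apply, mul_comm]
  refine ⟨algebraMap k L c, ?_, fun v => ?_⟩
  · rintro hc0
    exact h.ne_zero (by rw [hval, (map_eq_zero _).mp hc0, zero_smul])
  · ext i
    fin_cases i <;> simp [hval] <;> ring

lemma exists_out_mul_smul_eq (σ τ : PGL2 k) :
    ∃ c : L, c ≠ 0 ∧ ∀ v : Fin 2 → L,
      (Quotient.out (σ * τ)).map (algebraMap k L) • v =
        c • (Quotient.out σ).map (algebraMap k L) • (Quotient.out τ).map (algebraMap k L) • v := by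
  simp only [← mul_smul, ← map_mul]
  apply exists_smul_eq_of_mk_eq
  simp only [QuotientGroup.mk_mul, QuotientGroup.out_eq']

/-- Homogeneous coordinates of a point of `ℙ¹(L)`. At `∞` they are normalized so that
`cross (coords c) ![x, 1]` is the factor `1` attached to `c = ∞` by `OnePoint.polyFactor`. -/
def coords (P : OnePoint L) : Fin 2 → L :=
  P.elim ![-1, 0] fun c => ![c, 1]

@[simp]
lemma coords_infty : coords (∞ : OnePoint L) = ![-1, 0] :=
  rfl

@[simp]
lemma coords_coe (c : L) : coords (c : OnePoint L) = ![c, 1] :=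
  rfl

/-- The alternating form on `R²`, which over a field vanishes exactly on pairs of homogeneous
coordinates of the same point. -/
def cross {R : Type*} [CommRing R] (v w : Fin 2 → R) : R :=
  v 1 * w 0 - v 0 * w 1

open scoped Classical in
lemma exists_coords_smul_eq (g : GL (Fin 2) L) (P : OnePoint L) :
    ∃ μ : L, μ ≠ 0 ∧ coords (g • P) = μ • g • coords P := by
  have hdet := g.det_ne_zero
  rw [Matrix.det_fin_two] at hdet
  cases P with
  | infty =>
    by_cases h : g 1 0 = 0
    · refine ⟨(g 0 0)⁻¹, by grind, ?_⟩
      have : g 0 0 ≠ 0 := by grind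
      simp [smul_infty_eq_ite, h, this]
    · refine ⟨-(g 1 0)⁻¹, by grind, ?_⟩
      simp [smul_infty_eq_ite, h, div_eq_inv_mul]
  | coe c =>
    by_cases h : g 1 0 * c + g 1 1 = 0
    · have : g 0 0 * c + g 0 1 ≠ 0 := by grind
      refine ⟨-(g 0 0 * c + g 0 1)⁻¹, by grind, ?_⟩
      simp [smul_some_eq_ite, h, this]
    · refine ⟨(g 1 0 * c + g 1 1)⁻¹, by grind, ?_⟩
      simp [smul_some_eq_ite, h, div_eq_inv_mul]

lemma cross_smul_left {R : Type*} [CommRing R] (c : R) (v w : Fin 2 → R) :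
    cross (c • v) w = c * cross v w := by
  simp only [cross, Pi.smul_apply, smul_eq_mul]
  ring

lemma cross_smul_right {R : Type*} [CommRing R] (c : R) (v w : Fin 2 → R) :
    cross v (c • w) = c * cross v w := by
  simp only [cross, Pi.smul_apply, smul_eq_mul]
  ring

lemma cross_smul_smul {R : Type*} [CommRing R] (g : GL (Fin 2) R) (v w : Fin 2 → R) :
    cross (g • v) (g • w) = g.val.det * cross v w := by
  simp [cross, Matrix.det_fin_two]
  ring

lemma cross_coords_eq_zero_iff {P Q : OnePoint L} : cross (coords P) (coords Q) = 0 ↔ P = Q := by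
  cases P <;> cases Q <;> simp [cross, sub_eq_zero, eq_comm]

lemma map_cross_coords {L' : Type*} [Field L'] [Algebra k L'] (f : L →ₐ[k] L') (P Q : OnePoint L) :
    f (cross (coords P) (coords Q)) =
      cross (coords (OnePoint.map f P)) (coords (OnePoint.map f Q)) := by
  cases P <;> cases Q <;> simp [cross]

section OrbitForm

variable (G : Subgroup (PGL2 k))

/-- The binary form vanishing on the `G`-orbit of `a`, evaluated at the homogeneous coordinates of
`P` fixed by `coords`. The `finprod` is meaningful for finite `G` only. -/
noncomputable def orbitForm (a : OnePoint k) (P : OnePoint L) : L :=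
  ∏ᶠ σ : G, cross (coords (σ • baseChange L a)) (coords P)

/-- The quotient of the orbit forms of `a` and `b`: the covering map `ℙ¹ → ℙ¹/G`, in the
coordinate of the target which vanishes at the orbit of `a` and has its poles at that of `b`. -/
noncomputable def orbitRatio (a b : OnePoint k) (P : OnePoint L) : L :=
  orbitForm G a P / orbitForm G b P

variable {G}

lemma exists_orbitForm_eq_mul_prod [Fintype G] (a : OnePoint k) :
    ∃ M : L, ∀ P, orbitForm G a P = M * ∏ σ : G,
      cross ((Quotient.out (σ : PGL2 k)).map (algebraMap k L) • coords (baseChange L a))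
        (coords P) := by
  choose μ _ hμ using fun σ : G =>
    exists_coords_smul_eq ((Quotient.out (σ : PGL2 k)).map (algebraMap k L)) (baseChange L a)
  refine ⟨∏ σ, μ σ, fun P => ?_⟩
  simp only [orbitForm, finprod_eq_prod_of_fintype, Subgroup.smul_def, ← out_smul, hμ,
    cross_smul_left, Finset.prod_mul_distrib]

variable [Finite G]

lemma orbitForm_eq_zero_iff {a : OnePoint k} {P : OnePoint L} :
    orbitForm G a P = 0 ↔ P ∈ MulAction.orbit G (baseChange L a) := by
  have := Fintype.ofFinite G
  simp [orbitForm, finprod_eq_prod_of_fintype, Finset.prod_eq_zero_iff, cross_coords_eq_zero_iff,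
    MulAction.mem_orbit_iff]

lemma orbitForm_ne_zero_of_eq_zero {a b : OnePoint k} {P : OnePoint L}
    (hab : b ∉ MulAction.orbit G a) (ha : orbitForm G a P = 0) : orbitForm G b P ≠ 0 := by
  intro hb
  rw [orbitForm_eq_zero_iff, MulAction.mem_orbit_symm] at hb
  rw [orbitForm_eq_zero_iff, ← MulAction.orbit_eq_iff] at ha
  exact hab ((baseChange_mem_orbit_iff (L := L)).mp (ha ▸ hb))

lemma map_orbitForm {L' : Type*} [Field L'] [Algebra k L'] (f : L →ₐ[k] L') (a : OnePoint k)
    (P : OnePoint L) : f (orbitForm G a P) = orbitForm G a (OnePoint.map f P) := by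
  have := Fintype.ofFinite G
  simp only [orbitForm, finprod_eq_prod_of_fintype, map_prod, map_cross_coords, Subgroup.smul_def,
    map_smul, map_baseChange]

/-- The factor `κ` does not depend on `a`: this is why the ratio of two orbit forms is an
invariant function. -/
lemma exists_orbitForm_smul_eq {ρ : PGL2 k} (hρ : ρ ∈ G) (P : OnePoint L) :
    ∃ κ : L, κ ≠ 0 ∧ ∀ a, orbitForm G a (ρ • P) = κ * orbitForm G a P := by
  classical
  have := Fintype.ofFinite G
  set g : GL (Fin 2) L := (Quotient.out ρ).map (algebraMap k L) with hg
  obtain ⟨ν, hν0, hν⟩ := exists_coords_smul_eq g P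
  rw [show g • P = ρ • P from out_smul ρ P] at hν
  choose c hc0 hc using fun τ : G => exists_out_mul_smul_eq (L := L) ρ τ
  refine ⟨∏ τ, c τ * ν * g.val.det, Finset.prod_ne_zero_iff.mpr fun τ _ =>
    mul_ne_zero (mul_ne_zero (hc0 τ) hν0) g.det_ne_zero, fun a => ?_⟩
  obtain ⟨M, hM⟩ := exists_orbitForm_eq_mul_prod (G := G) (L := L) a
  rw [hM, hM, mul_left_comm, ← Finset.prod_mul_distrib,
    ← Equiv.prod_comp (Equiv.mulLeft (⟨ρ, hρ⟩ : G))]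
  congr! 2 with τ
  simp only [Equiv.coe_mulLeft, Subgroup.coe_mul, hc, hν, cross_smul_left, cross_smul_right, ← hg,
    cross_smul_smul]
  ring

lemma orbitRatio_smul {ρ : PGL2 k} (hρ : ρ ∈ G) (a b : OnePoint k) (P : OnePoint L) :
    orbitRatio G a b (ρ • P) = orbitRatio G a b P := by
  obtain ⟨κ, hκ, h⟩ := exists_orbitForm_smul_eq hρ P
  rw [orbitRatio, h, h, mul_div_mul_left _ _ hκ, orbitRatio]

lemma map_orbitRatio {L' : Type*} [Field L'] [Algebra k L'] (f : L →ₐ[k] L') (a b : OnePoint k)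
    (P : OnePoint L) : f (orbitRatio G a b P) = orbitRatio G a b (OnePoint.map f P) := by
  rw [orbitRatio, map_div₀, map_orbitForm, map_orbitForm, orbitRatio]

end OrbitForm

section Fiber

variable (G : Subgroup (PGL2 k)) (a b : OnePoint k) (m : k)

variable (L) in
/-- The fibre of `orbitRatio G a b` above `m`, as a set of points of `ℙ¹(L)`. The equation is
written without division, to avoid the junk value of `orbitRatio` at its poles. -/
def fiber : Set (OnePoint L) :=
  {P | orbitForm G a P = algebraMap k L m * orbitForm G b P}

variable {G a b m}

lemma mem_fiber_iff {P : OnePoint L} :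
    P ∈ fiber L G a b m ↔ orbitForm G a P = algebraMap k L m * orbitForm G b P :=
  Iff.rfl

variable [Finite G]

lemma smul_mem_fiber {σ : PGL2 k} (hσ : σ ∈ G) {P : OnePoint L} (hP : P ∈ fiber L G a b m) :
    σ • P ∈ fiber L G a b m := by
  obtain ⟨κ, -, h⟩ := exists_orbitForm_smul_eq hσ P
  rw [mem_fiber_iff] at hP ⊢
  rw [h, h, hP, mul_left_comm]

lemma map_mem_fiber {L' : Type*} [Field L'] [Algebra k L'] (f : L →ₐ[k] L') {P : OnePoint L}
    (hP : P ∈ fiber L G a b m) : OnePoint.map f P ∈ fiber L' G a b m := by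
  rw [mem_fiber_iff] at hP ⊢
  rw [← map_orbitForm, ← map_orbitForm, hP, map_mul, f.commutes]

lemma orbitForm_ne_zero_of_mem_fiber (hab : b ∉ MulAction.orbit G a) {P : OnePoint L}
    (hP : P ∈ fiber L G a b m) : orbitForm G b P ≠ 0 := by
  intro hb
  refine orbitForm_ne_zero_of_eq_zero hab ?_ hb
  rw [mem_fiber_iff.mp hP, hb, mul_zero]

lemma orbitRatio_eq_of_mem_fiber (hab : b ∉ MulAction.orbit G a) {P : OnePoint L}
    (hP : P ∈ fiber L G a b m) : orbitRatio G a b P = algebraMap k L m :=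
  div_eq_of_eq_mul (orbitForm_ne_zero_of_mem_fiber hab hP) hP

lemma finite_setOf_exists_mem_fiber (hab : b ∉ MulAction.orbit G a) {S : Set (OnePoint L)}
    (hS : S.Finite) : {m : k | ∃ P ∈ S, P ∈ fiber L G a b m}.Finite := by
  refine (hS.biUnion (t := fun P => {m | P ∈ fiber L G a b m}) fun P _ => ?_).subset
    fun m ⟨P, hPS, hP⟩ => Set.mem_biUnion hPS hP
  refine Set.Subsingleton.finite fun m hm m' hm' => (algebraMap k L).injective ?_
  rw [← orbitRatio_eq_of_mem_fiber hab hm, ← orbitRatio_eq_of_mem_fiber hab hm']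

end Fiber

section OrbitPoly

variable (G : Subgroup (PGL2 k))

/-- The polynomial `∏ σ ∈ G, (x - σ a)`, with the factors at `∞` left out. -/
noncomputable def orbitPoly (a : OnePoint k) : k[X] :=
  ∏ᶠ σ : G, polyFactor (σ • a)

/-- The polynomial `R_m`, whose roots are the finite points of `fiber L G a b m`. -/
noncomputable def orbitPencil (a b : OnePoint k) (m : k) : k[X] :=
  orbitPoly G a - C m * orbitPoly G b

lemma polyFactor_eq (a : OnePoint k) : polyFactor a = C (coords a 1) * X - C (coords a 0) := by
  cases a with
  | infty => simp [show polyFactor (∞ : OnePoint k) = 1 from rfl]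
  | coe c => simp [show polyFactor (c : OnePoint k) = X - C c from rfl]

lemma coords_baseChange (a : OnePoint k) (i : Fin 2) :
    coords (baseChange L a) i = algebraMap k L (coords a i) := by
  cases a <;> fin_cases i <;> simp [baseChange]

lemma aeval_polyFactor (a : OnePoint k) (θ : L) :
    aeval θ (polyFactor a) = cross (coords (baseChange L a)) (coords (θ : OnePoint L)) := by
  simp [polyFactor_eq, cross, coords_baseChange]

lemma natDegree_polyFactor_le (a : OnePoint k) : (polyFactor a).natDegree ≤ 1 := by
  rw [polyFactor_eq]
  compute_degree

lemma algebraMap_coeff_one_polyFactor (a : OnePoint k) :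
    algebraMap k L ((polyFactor a).coeff 1) = -cross (coords (baseChange L a)) (coords ∞) := by
  simp [polyFactor_eq, cross, coords_baseChange]

variable {G} [Finite G]

lemma aeval_orbitPoly (a : OnePoint k) (θ : L) :
    aeval θ (orbitPoly G a) = orbitForm G a (θ : OnePoint L) := by
  have := Fintype.ofFinite G
  simp only [orbitPoly, orbitForm, finprod_eq_prod_of_fintype, map_prod, aeval_polyFactor,
    Subgroup.smul_def, smul_baseChange]

lemma natDegree_orbitPoly_le (a : OnePoint k) : (orbitPoly G a).natDegree ≤ Nat.card G := by
  have := Fintype.ofFinite G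
  rw [orbitPoly, finprod_eq_prod_of_fintype, Nat.card_eq_fintype_card]
  refine (natDegree_prod_le _ _).trans ?_
  simpa using Finset.sum_le_card_nsmul Finset.univ (fun σ : G => (polyFactor (σ • a)).natDegree) 1
    fun σ _ => natDegree_polyFactor_le _

lemma algebraMap_coeff_card_orbitPoly (a : OnePoint k) :
    algebraMap k L ((orbitPoly G a).coeff (Nat.card G)) =
      (-1) ^ Nat.card G * orbitForm G a (∞ : OnePoint L) := by
  have := Fintype.ofFinite G
  rw [orbitPoly, orbitForm, finprod_eq_prod_of_fintype, finprod_eq_prod_of_fintype,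
    Nat.card_eq_fintype_card, ← mul_one (Fintype.card G), ← Finset.card_univ,
    coeff_prod_of_natDegree_le _ _ _ fun σ _ => natDegree_polyFactor_le _, map_prod, mul_one,
    ← Finset.prod_neg]
  simp only [algebraMap_coeff_one_polyFactor, Subgroup.smul_def, smul_baseChange]

variable {a b : OnePoint k}

lemma isCoprime_orbitPoly (hab : b ∉ MulAction.orbit G a) :
    IsCoprime (orbitPoly G a) (orbitPoly G b) := by
  refine (isCoprime_iff_aeval_ne_zero_of_isAlgClosed _ (AlgebraicClosure k) _ _).mpr fun θ => ?_
  rw [aeval_orbitPoly, aeval_orbitPoly]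
  exact or_iff_not_imp_left.mpr fun h => orbitForm_ne_zero_of_eq_zero hab (of_not_not h)

lemma max_natDegree_orbitPoly (hab : b ∉ MulAction.orbit G a) :
    max (orbitPoly G a).natDegree (orbitPoly G b).natDegree = Nat.card G := by
  refine le_antisymm (max_le (natDegree_orbitPoly_le a) (natDegree_orbitPoly_le b)) ?_
  by_contra! hlt
  rw [max_lt_iff] at hlt
  have hzero : ∀ c : OnePoint k, (orbitPoly G c).natDegree < Nat.card G →
      orbitForm G c (∞ : OnePoint k) = 0 := fun c hc => by
    simpa [coeff_eq_zero_of_natDegree_lt hc] using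
      (algebraMap_coeff_card_orbitPoly (G := G) (L := k) c).symm
  exact orbitForm_ne_zero_of_eq_zero hab (hzero a hlt.1) (hzero b hlt.2)

lemma coe_mem_fiber_iff {m : k} {θ : L} :
    (θ : OnePoint L) ∈ fiber L G a b m ↔ aeval θ (orbitPencil G a b m) = 0 := by
  simp only [mem_fiber_iff, orbitPencil, map_sub, map_mul, aeval_C, aeval_orbitPoly,
    sub_eq_zero]

lemma natDegree_orbitPencil {m : k} (h : (∞ : OnePoint L) ∉ fiber L G a b m) :
    (orbitPencil G a b m).natDegree = Nat.card G := by
  refine natDegree_eq_of_le_of_coeff_ne_zero ?_ fun h0 => h ?_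
  · rw [orbitPencil]
    exact (natDegree_sub_le _ _).trans (max_le (natDegree_orbitPoly_le a)
      ((natDegree_C_mul_le m _).trans (natDegree_orbitPoly_le b)))
  · have := congrArg (algebraMap k L) h0
    rw [orbitPencil, coeff_sub, coeff_C_mul, map_sub, map_mul, algebraMap_coeff_card_orbitPoly,
      algebraMap_coeff_card_orbitPoly, map_zero, sub_eq_zero, mul_left_comm] at this
    exact mul_left_cancel₀ (by simp) this

end OrbitPoly

section Galois

noncomputable instance : MulAction Gal(L/k) (OnePoint L) where
  smul g P := OnePoint.map g P
  one_smul P := congrFun OnePoint.map_id P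
  mul_smul g h P := congrFun (OnePoint.map_comp g h) P

lemma galois_smul_eq_map (g : Gal(L/k)) (P : OnePoint L) :
    g • P = OnePoint.map (g : L →ₐ[k] L) P :=
  rfl

instance (G : Subgroup (PGL2 k)) : SMulCommClass Gal(L/k) G (OnePoint L) where
  smul_comm g σ P := map_smul (g : L →ₐ[k] L) σ P

variable {G : Subgroup (PGL2 k)} {a b : OnePoint k} {m : k}

/-- The points where the fibre of `orbitRatio G a b` may fail to have Galois group `G`: the point
`∞`, where the degree of `orbitPencil` drops, the ramification points of the covering `ℙ¹ → ℙ¹/G`,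
and the points whose image in an intermediate covering `ℙ¹/H` is rational. -/
def IsExceptional (G : Subgroup (PGL2 k)) (a b : OnePoint k) (P : OnePoint L) : Prop :=
  P = ∞ ∨ MulAction.stabilizer G P ≠ ⊥ ∨
    ∃ H < G, orbitRatio H a b P ∈ Set.range (algebraMap k L)

variable [Finite G]

lemma orbitPencil_ne_zero (hm : (∞ : OnePoint L) ∉ fiber L G a b m) : orbitPencil G a b m ≠ 0 :=
  ne_zero_of_natDegree_gt (natDegree_orbitPencil hm ▸ Nat.card_pos)

lemma image_coe_rootSet_orbitPencil (hm : (∞ : OnePoint L) ∉ fiber L G a b m) :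
    ((↑) : L → OnePoint L) '' (orbitPencil G a b m).rootSet L = fiber L G a b m := by
  ext P
  cases P with
  | infty => simp [hm]
  | coe z => simp [mem_rootSet, orbitPencil_ne_zero hm, coe_mem_fiber_iff]

lemma fiber_eq_orbit (hm : (∞ : OnePoint L) ∉ fiber L G a b m) {P : OnePoint L}
    (hP : P ∈ fiber L G a b m) (hstab : MulAction.stabilizer G P = ⊥) :
    fiber L G a b m = MulAction.orbit G P := by
  refine (Set.eq_of_subset_of_ncard_le ?_ ?_ ?_).symm
  · rintro _ ⟨σ, rfl⟩
    exact smul_mem_fiber σ.2 hP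
  · rw [← image_coe_rootSet_orbitPencil hm, Set.ncard_image_of_injective _ OnePoint.coe_injective,
      ← MulAction.index_stabilizer, hstab, Subgroup.index_bot, ← natDegree_orbitPencil hm]
    exact ncard_rootSet_le _ _
  · exact image_coe_rootSet_orbitPencil hm ▸ (rootSet_finite _ L).image _

lemma ncard_rootSet_orbitPencil (hm : (∞ : OnePoint L) ∉ fiber L G a b m) {P : OnePoint L}
    (hP : P ∈ fiber L G a b m) (hstab : MulAction.stabilizer G P = ⊥) :
    ((orbitPencil G a b m).rootSet L).ncard = (orbitPencil G a b m).natDegree := by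
  rw [← Set.ncard_image_of_injective _ OnePoint.coe_injective, image_coe_rootSet_orbitPencil hm,
    fiber_eq_orbit hm hP hstab, ← MulAction.index_stabilizer, hstab, Subgroup.index_bot,
    natDegree_orbitPencil hm]

variable [IsSplittingField k L (orbitPencil G a b m)]

lemma isGalois_of_mem_fiber (hm : (∞ : OnePoint L) ∉ fiber L G a b m) {P : OnePoint L}
    (hP : P ∈ fiber L G a b m) (hstab : MulAction.stabilizer G P = ⊥) : IsGalois k L := by
  refine IsGalois.of_separable_splitting_field (p := orbitPencil G a b m) ?_
  rw [← card_rootSet_eq_natDegree_iff_of_splits (orbitPencil_ne_zero hm)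
    (IsSplittingField.splits L (orbitPencil G a b m)), ← ncard_rootSet_orbitPencil hm hP hstab,
    ← Nat.card_eq_fintype_card, Nat.card_coe_set_eq]

lemma eq_one_of_galois_smul_eq (hm : (∞ : OnePoint L) ∉ fiber L G a b m) {P : OnePoint L}
    (hP : P ∈ fiber L G a b m) (hstab : MulAction.stabilizer G P = ⊥) {g : Gal(L/k)}
    (hg : g • P = P) : g = 1 := by
  have hroots : Set.EqOn g (AlgHom.id k L) ((orbitPencil G a b m).rootSet L) := fun z hz => by
    obtain ⟨σ, hσ⟩ : (z : OnePoint L) ∈ MulAction.orbit G P := by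
      rw [← fiber_eq_orbit hm hP hstab, ← image_coe_rootSet_orbitPencil hm]
      exact Set.mem_image_of_mem _ hz
    refine OnePoint.coe_injective (show g • (z : OnePoint L) = z from ?_)
    rw [← hσ]
    exact (smul_comm g σ _).trans (congrArg (σ • ·) hg)
  have := AlgHom.ext_of_adjoin_eq_top (φ₁ := (g : L →ₐ[k] L)) (φ₂ := AlgHom.id k L)
    (IsSplittingField.adjoin_rootSet L (orbitPencil G a b m)) hroots
  exact AlgEquiv.ext fun z => DFunLike.congr_fun this z

lemma exists_mem_fiber (hm : (∞ : OnePoint L) ∉ fiber L G a b m) :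
    ∃ θ : L, (θ : OnePoint L) ∈ fiber L G a b m := by
  have hdeg := natDegree_orbitPencil hm
  obtain ⟨θ, hθ⟩ := (IsSplittingField.splits L (orbitPencil G a b m)).exists_eval_eq_zero
    (by rw [degree_map]; exact (natDegree_pos_iff_degree_pos.mp (hdeg ▸ Nat.card_pos)).ne')
  exact ⟨θ, coe_mem_fiber_iff.mpr (by rwa [eval_map_algebraMap] at hθ)⟩

lemma bijective_of_galois_smul_eq (hm : (∞ : OnePoint L) ∉ fiber L G a b m) {P : OnePoint L}
    (hP : P ∈ fiber L G a b m) (hexc : ¬ IsExceptional G a b P) {ψ : Gal(L/k) →* G}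
    (hψ : ∀ g, g • P = (ψ g)⁻¹ • P) : Function.Bijective ψ := by
  simp only [IsExceptional, not_or, not_not, not_exists, not_and] at hexc
  obtain ⟨-, hstab, hirr⟩ := hexc
  have := isGalois_of_mem_fiber hm hP hstab
  have := IsSplittingField.finiteDimensional L (orbitPencil G a b m)
  constructor
  · refine (injective_iff_map_eq_one ψ).mpr fun g hg => eq_one_of_galois_smul_eq hm hP hstab ?_
    rw [hψ, hg, inv_one, one_smul]
  · rw [← MonoidHom.range_eq_top]
    by_contra hne
    let H := ψ.range.map G.subtype
    have hlt : H < G := (Subgroup.map_subtype_le _).lt_of_ne fun h => hne <|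
      Subgroup.map_injective G.subtype_injective <| by
        rwa [← MonoidHom.range_eq_map, Subgroup.range_subtype]
    have : Finite H := .of_injective _ (Subgroup.inclusion_injective hlt.le)
    refine hirr H hlt ((IsGalois.mem_range_algebraMap_iff_fixed _).mpr fun g => ?_)
    have hg : ((ψ g)⁻¹ : PGL2 k) ∈ H :=
      inv_mem (Subgroup.mem_map_of_mem G.subtype (MonoidHom.mem_range.mpr ⟨g, rfl⟩))
    refine (map_orbitRatio (g : L →ₐ[k] L) a b P).trans ?_
    rw [← galois_smul_eq_map, hψ]
    exact orbitRatio_smul hg a b P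

theorem irreducible_isGalois_of_forall_not_isExceptional
    (hexc : ∀ P ∈ fiber L G a b m, ¬ IsExceptional G a b P) :
    Irreducible (orbitPencil G a b m) ∧ IsGalois k L ∧ Nonempty (Gal(L/k) ≃* G) := by
  have hm : (∞ : OnePoint L) ∉ fiber L G a b m := fun h => hexc _ h (.inl rfl)
  obtain ⟨θ, hθ⟩ := exists_mem_fiber hm
  have hstab : MulAction.stabilizer G (θ : OnePoint L) = ⊥ :=
    of_not_not fun h => hexc _ hθ (.inr (.inl h))
  have horbit := fiber_eq_orbit hm hθ hstab
  obtain ⟨ψ, hψ⟩ := exists_monoidHom_of_smul_mem_orbit (A := Gal(L/k)) hstab fun g =>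
    horbit ▸ map_mem_fiber (g : L →ₐ[k] L) hθ
  have hbij := bijective_of_galois_smul_eq hm hθ (hexc _ hθ) hψ
  refine ⟨irreducible_of_transitive (orbitPencil_ne_zero hm) (coe_mem_fiber_iff.mp hθ)
    (ncard_rootSet_orbitPencil hm hθ hstab) fun z hz => ?_, isGalois_of_mem_fiber hm hθ hstab,
    ⟨MulEquiv.ofBijective ψ hbij⟩⟩
  obtain ⟨σ, hσ⟩ : (z : OnePoint L) ∈ MulAction.orbit G (θ : OnePoint L) := by
    rw [← horbit, coe_mem_fiber_iff]
    exact (mem_rootSet.mp hz).2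
  obtain ⟨g, hg⟩ := hbij.surjective σ⁻¹
  refine ⟨g, OnePoint.coe_injective (?_ : g • (θ : OnePoint L) = z)⟩
  rw [hψ, hg, inv_inv]
  exact hσ

end Galois

section Thin

variable {G : Subgroup (PGL2 k)} [Finite G] {a b : OnePoint k} {m : k}

lemma IsExceptional.map {L' : Type*} [Field L'] [Algebra k L'] (f : L →ₐ[k] L') {P : OnePoint L}
    (hP : IsExceptional G a b P) : IsExceptional G a b (OnePoint.map f P) := by
  obtain rfl | hstab | ⟨H, hlt, c, hc⟩ := hP
  · exact .inl rfl
  · refine .inr (.inl (ne_bot_of_le_ne_bot hstab fun σ hσ => ?_))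
    exact (map_smul f (σ : PGL2 k) P).symm.trans (congrArg _ hσ)
  · have : Finite H := .of_injective _ (Subgroup.inclusion_injective hlt.le)
    exact .inr (.inr ⟨H, hlt, c, by rw [← map_orbitRatio, ← hc, f.commutes]⟩)

lemma finite_setOf_stabilizer_ne_bot :
    {P : OnePoint L | MulAction.stabilizer G P ≠ ⊥}.Finite := by
  refine (Set.finite_iUnion fun σ : {σ : G // σ ≠ 1} =>
    finite_setOf_smul_eq (L := L) (Subtype.coe_ne_coe.mpr σ.2)).subset fun P hP => ?_
  obtain ⟨⟨σ, hσP⟩, hσ⟩ := Subgroup.ne_bot_iff_exists_ne_one.mp hP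
  exact Set.mem_iUnion.mpr ⟨⟨σ, fun h => hσ (Subtype.ext h)⟩, hσP⟩

lemma isThin_setOf_orbitRatio_mem_range (hab : b ∉ MulAction.orbit G a) {H : Subgroup (PGL2 k)}
    (hH : H < G) :
    IsThin {m : k | ∃ θ : L, (θ : OnePoint L) ∈ fiber L G a b m ∧
      orbitRatio H a b (θ : OnePoint L) ∈ Set.range (algebraMap k L)} := by
  have : Finite H := .of_injective _ (Subgroup.inclusion_injective hH.le)
  have horbit : b ∉ MulAction.orbit H a := fun ⟨σ, hσ⟩ => hab ⟨⟨σ, hH.le σ.2⟩, hσ⟩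
  refine (IsThin.setOf_exists_div_eq (L := L) (isCoprime_orbitPoly hab)
    (isCoprime_orbitPoly horbit) ?_ ?_).mono ?_
  · rw [max_natDegree_orbitPoly horbit]
    exact Nat.card_pos
  · rw [max_natDegree_orbitPoly horbit, max_natDegree_orbitPoly hab]
    exact Set.ncard_lt_ncard hH (Set.toFinite _)
  · rintro m ⟨θ, hθ, hrat⟩
    simp only [aeval_orbitPoly]
    have hb := orbitForm_ne_zero_of_mem_fiber hab hθ
    refine ⟨θ, hb, fun h => hb ?_, orbitRatio_eq_of_mem_fiber hab hθ, hrat⟩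
    obtain ⟨σ, hσ⟩ := orbitForm_eq_zero_iff.mp h
    exact orbitForm_eq_zero_iff.mpr ⟨⟨σ, hH.le σ.2⟩, hσ⟩

lemma isThin_setOf_isExceptional (hab : b ∉ MulAction.orbit G a) :
    IsThin {m : k | ∃ P ∈ fiber L G a b m, IsExceptional G a b P} := by
  have hsub : {H : Subgroup (PGL2 k) | H < G}.Finite :=
    ((Set.toFinite (G : Set (PGL2 k))).finite_subsets.preimage SetLike.coe_injective.injOn).subset
      fun _ hH => SetLike.coe_subset_coe.mpr (le_of_lt hH)
  refine ((IsThin.of_finite (finite_setOf_exists_mem_fiber hab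
    ((finite_setOf_stabilizer_ne_bot (G := G) (L := L)).insert ∞))).union
    (.biUnion hsub fun H hH => isThin_setOf_orbitRatio_mem_range (L := L) hab hH)).mono ?_
  rintro m ⟨P, hP, hexc⟩
  by_cases hfin : P = ∞ ∨ MulAction.stabilizer G P ≠ ⊥
  · exact .inl ⟨P, hfin, hP⟩
  obtain ⟨H, hH, hrat⟩ := (or_assoc.mpr hexc).resolve_left hfin
  obtain ⟨θ, rfl⟩ := OnePoint.ne_infty_iff_exists.mp (not_or.mp hfin).1
  exact .inr (Set.mem_biUnion hH ⟨θ, hP, hrat⟩)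

lemma irreducible_isGalois_splittingField
    (hm : ∀ P ∈ fiber (AlgebraicClosure k) G a b m, ¬ IsExceptional G a b P) :
    Irreducible (orbitPencil G a b m) ∧ IsGalois k (orbitPencil G a b m).SplittingField ∧
      Nonempty (Gal((orbitPencil G a b m).SplittingField/k) ≃* G) :=
  let f : (orbitPencil G a b m).SplittingField →ₐ[k] AlgebraicClosure k := IsAlgClosed.lift
  irreducible_isGalois_of_forall_not_isExceptional fun _ hP hexc =>
    hm _ (map_mem_fiber f hP) (hexc.map f)

end Thin

end PGL2

theorem specialization_galois_group_general
    (k : Type*) [Field k] (G : Subgroup (PGL2 k)) [Fintype G]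
    (a b : OnePoint k) (hab : ¬ PGL2.SameOrbit G a b)
    (R : k → Polynomial k)
    (hR : ∀ m : k, R m = (∏ σ : G, OnePoint.polyFactor (PGL2.act (σ : PGL2 k) a)) -
      Polynomial.C m * ∏ σ : G, OnePoint.polyFactor (PGL2.act (σ : PGL2 k) b)) :
    ∃ T : Set k, IsThin T ∧ ∀ m ∉ T, Irreducible (R m) ∧
      IsGalois k (R m).SplittingField ∧
      Nonempty (((R m).SplittingField ≃ₐ[k] (R m).SplittingField) ≃* G) := by
  have hR' (m : k) : R m = PGL2.orbitPencil G a b m := by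
    simp only [hR, PGL2.orbitPencil, PGL2.orbitPoly, finprod_eq_prod_of_fintype,
      PGL2.act_eq_smul, Subgroup.smul_def]
  refine ⟨_, PGL2.isThin_setOf_isExceptional (L := AlgebraicClosure k)
    (PGL2.sameOrbit_iff.not.mp hab), fun m hm => ?_⟩
  rw [hR']
  exact PGL2.irreducible_isGalois_splittingField fun P hP hexc => hm ⟨P, hP, hexc⟩

/-- **Hilbert specialization of the covers.**
Let `k` be a number field, `G` a finite subgroup of `PGL₂(k)`, and `a, b ∈ ℙ¹(k)` two points
not lying in the same `G`-orbit.  Consider `R_t = ∏_{σ∈G}(x - σ(a)) - t·∏_{σ∈G}(x - σ(b))`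
(with the convention that a factor `x - c` is `1` when `c = ∞`).  Then there is a thin set
`T ⊆ k` such that for every `m ∉ T` the specialized polynomial `R_m ∈ k[x]` is irreducible
and its splitting field is a Galois extension of `k` with Galois group isomorphic to `G`. -/
theorem specialization_galois_group
    (k : Type*) [Field k] [NumberField k] (G : Subgroup (PGL2 k)) [Fintype G]
    (a b : OnePoint k) (hab : ¬ PGL2.SameOrbit G a b)
    (R : k → Polynomial k)
    (hR : ∀ m : k, R m = (∏ σ : G, OnePoint.polyFactor (PGL2.act (σ : PGL2 k) a)) -
      Polynomial.C m * ∏ σ : G, OnePoint.polyFactor (PGL2.act (σ : PGL2 k) b)) :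
    ∃ T : Set k, IsThin T ∧ ∀ m ∉ T, Irreducible (R m) ∧
      IsGalois k (R m).SplittingField ∧
      Nonempty (((R m).SplittingField ≃ₐ[k] (R m).SplittingField) ≃* G) :=
  specialization_galois_group_general k G a b hab R hR
end

section
/- Let r ≥ 3 be an integer, let ζ ∈ ℂ be a primitive r-th root of unity, and let f ∈ PGL_2(ℂ) be the homography z ↦ ((ζ+ζ⁻¹+1)z−1)/(z+1), which is an element of order r. Let G = ⟨f⟩ (cyclic of order r) or G = ⟨f, z↦1/z⟩ (dihedral of order 2r). Then the following identities hold in the rational function field ℂ(z): ∏_{σ∈G} σ(z) = 1 and ∏_{σ∈G} (σ(z)+1) = (ζ+1)^{#G}. -/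
open Polynomial OnePoint

/-!
Let `α` be a fixed point of `f(z) = (a z + b)/(c z + d)`. Then
`f(z) - α = (a - c α)(z - α)/(c z + d)`, so `c σ(z) + d` is the constant `a - c α` times
`(σ(z) - α)/((f σ)(z) - α)`; over a finite group containing `f` these quotients multiply to `1`,
as `σ ↦ f σ` permutes the group.

The homography of the theorem fixes `ζ⁻¹` and `ζ`, so `∏ (σ(z) + 1)` is equal both to `(ζ + 1)^#G`
and to `(ζ⁻¹ + 1)^#G`. Since `(z + 1)(f(z) + 1) = (ζ + 1)(ζ⁻¹ + 1) z`, multiplying over the group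
yields `∏ σ(z) = 1`.
-/

theorem prod_subgroup_mul_left {P M : Type*} [Group P] [CommMonoid M] (G : Subgroup P)
    [Fintype G] {f : P} (hf : f ∈ G) (φ : P → M) :
    ∏ σ : G, φ (f * σ) = ∏ σ : G, φ σ :=
  Fintype.prod_equiv (Equiv.mulLeft ⟨f, hf⟩) _ _ fun _ => rfl

theorem ratFunc_C_mul_X_add_C_eq_zero_iff {k : Type*} [Field k] {a b : k} :
    (RatFunc.C a * RatFunc.X + RatFunc.C b : RatFunc k) = 0 ↔ a = 0 ∧ b = 0 := by
  have hcast : RatFunc.C a * RatFunc.X + RatFunc.C b =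
      algebraMap k[X] (RatFunc k) (C a * X + C b) := by
    simp only [map_add, map_mul, RatFunc.algebraMap_C, RatFunc.algebraMap_X]
  rw [hcast, FaithfulSMul.algebraMap_eq_zero_iff]
  refine ⟨fun h => ⟨?_, ?_⟩, fun ⟨ha, hb⟩ => by simp [ha, hb]⟩
  · simpa using congrArg (coeff · 1) h
  · simpa using congrArg (coeff · 0) h

namespace PGL2

variable {k : Type*} [Field k]

theorem toRatFunc_mk (A : Matrix.GeneralLinearGroup (Fin 2) k) :
    toRatFunc (QuotientGroup.mk A : PGL2 k) =
      (RatFunc.C (A.val 0 0) * RatFunc.X + RatFunc.C (A.val 0 1)) /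
        (RatFunc.C (A.val 1 0) * RatFunc.X + RatFunc.C (A.val 1 1)) := by
  obtain ⟨⟨Z, hZ⟩, hout⟩ :=
    QuotientGroup.mk_out_eq_mul (Subgroup.center (Matrix.GeneralLinearGroup (Fin 2) k)) A
  obtain ⟨s, hs⟩ := Matrix.GeneralLinearGroup.mem_center_iff_val_mem_range_scalar.1 hZ
  have hs0 : RatFunc.C s ≠ 0 := by
    rw [ne_eq, map_eq_zero]
    rintro rfl
    exact Z.ne_zero (by rw [← hs, map_zero])
  have hval : (Quotient.out (QuotientGroup.mk A : PGL2 k)).val = s • A.val := by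
    rw [show Quotient.out (QuotientGroup.mk A : PGL2 k) = A * Z from hout, Units.val_mul, ← hs,
      Matrix.scalar_apply, ← Matrix.smul_one_eq_diagonal, Matrix.mul_smul, mul_one]
  simp only [toRatFunc, hval, Matrix.smul_apply, smul_eq_mul, map_mul]
  rw [mul_assoc, mul_assoc, ← mul_add, ← mul_add, mul_div_mul_left _ _ hs0]

theorem toRatFunc_mk_denom_ne_zero (A : Matrix.GeneralLinearGroup (Fin 2) k) :
    (RatFunc.C (A.val 1 0) * RatFunc.X + RatFunc.C (A.val 1 1) : RatFunc k) ≠ 0 := by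
  intro h
  obtain ⟨h0, h1⟩ := ratFunc_C_mul_X_add_C_eq_zero_iff.1 h
  exact A.det.ne_zero (by simp [Matrix.det_fin_two, h0, h1])

theorem toRatFunc_ne_C (σ : PGL2 k) (α : k) : σ.toRatFunc ≠ RatFunc.C α := by
  obtain ⟨A, rfl⟩ := QuotientGroup.mk_surjective σ
  rw [toRatFunc_mk, ne_eq, div_eq_iff (toRatFunc_mk_denom_ne_zero A)]
  intro h
  have hlin : RatFunc.C (A.val 0 0 - α * A.val 1 0) * RatFunc.X +
      RatFunc.C (A.val 0 1 - α * A.val 1 1) = (0 : RatFunc k) := by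
    simp only [map_sub, map_mul]
    linear_combination h
  obtain ⟨h0, h1⟩ := ratFunc_C_mul_X_add_C_eq_zero_iff.1 hlin
  refine A.det.ne_zero ?_
  rw [Matrix.GeneralLinearGroup.val_det_apply, Matrix.det_fin_two]
  linear_combination A.val 1 1 * h0 - A.val 1 0 * h1

theorem toRatFunc_add_one_ne_zero (σ : PGL2 k) : σ.toRatFunc + 1 ≠ 0 := fun h =>
  σ.toRatFunc_ne_C (-1) (by rw [eq_neg_of_add_eq_zero_left h, map_neg, map_one])

/-- The substitution `p(z) ↦ p(σ(z))`, an endomorphism of the field `k(z)`. -/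
noncomputable def substHom (σ : PGL2 k) : RatFunc k →ₐ[k] RatFunc k :=
  (IntermediateField.val _).comp (RatFunc.algEquivOfTranscendental σ.toRatFunc
    (RatFunc.transcendental_of_ne_C _ (not_exists.2 σ.toRatFunc_ne_C))).toAlgHom

@[simp]
theorem substHom_X (σ : PGL2 k) : substHom σ RatFunc.X = σ.toRatFunc := by
  simp [substHom]

@[simp]
theorem substHom_C (σ : PGL2 k) (a : k) : substHom σ (RatFunc.C a) = RatFunc.C a :=
  (substHom σ).commutes a

theorem toRatFunc_mul (σ τ : PGL2 k) : (σ * τ).toRatFunc = substHom τ σ.toRatFunc := by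
  obtain ⟨A, rfl⟩ := QuotientGroup.mk_surjective σ
  obtain ⟨B, rfl⟩ := QuotientGroup.mk_surjective τ
  have hB := toRatFunc_mk_denom_ne_zero B
  rw [← QuotientGroup.mk_mul, toRatFunc_mk, toRatFunc_mk A]
  simp only [map_div₀, map_add, map_mul, substHom_X, substHom_C, toRatFunc_mk B, Units.val_mul,
    Matrix.mul_apply, Fin.sum_univ_two]
  rw [mul_div_assoc', mul_div_assoc', div_add' _ _ _ hB, div_add' _ _ _ hB,
    div_div_div_cancel_right₀ hB]
  congr 1 <;> ring

theorem C_mul_toRatFunc_add_C_mul_toRatFunc_mul_sub_C {f : PGL2 k} {a b c d α : k}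
    (hf : f.toRatFunc = (RatFunc.C a * RatFunc.X + RatFunc.C b) /
      (RatFunc.C c * RatFunc.X + RatFunc.C d))
    (hα : a * α + b = α * (c * α + d)) (σ : PGL2 k) :
    (RatFunc.C c * σ.toRatFunc + RatFunc.C d) * ((f * σ).toRatFunc - RatFunc.C α) =
      RatFunc.C (a - c * α) * (σ.toRatFunc - RatFunc.C α) := by
  have hden : (RatFunc.C c * RatFunc.X + RatFunc.C d : RatFunc k) ≠ 0 := fun h =>
    f.toRatFunc_ne_C 0 (by rw [hf, h, div_zero, map_zero])
  have hX : (RatFunc.C c * RatFunc.X + RatFunc.C d) * (f.toRatFunc - RatFunc.C α) =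
      RatFunc.C (a - c * α) * (RatFunc.X - RatFunc.C α) := by
    have hC := congrArg (RatFunc.C (K := k)) hα
    simp only [map_add, map_mul] at hC
    rw [hf, mul_sub, mul_div_cancel₀ _ hden, map_sub, map_mul]
    linear_combination hC
  simpa only [map_mul, map_add, map_sub, substHom_X, substHom_C, ← toRatFunc_mul]
    using congrArg (substHom σ) hX

theorem prod_C_mul_toRatFunc_add_C {f : PGL2 k} {a b c d α : k}
    (hf : f.toRatFunc = (RatFunc.C a * RatFunc.X + RatFunc.C b) /
      (RatFunc.C c * RatFunc.X + RatFunc.C d))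
    (hα : a * α + b = α * (c * α + d)) (G : Subgroup (PGL2 k)) [Fintype G] (hfG : f ∈ G) :
    ∏ σ : G, (RatFunc.C c * (σ : PGL2 k).toRatFunc + RatFunc.C d) =
      RatFunc.C ((a - c * α) ^ Nat.card G) := by
  have hshift : ∏ σ : G, ((f * σ).toRatFunc - RatFunc.C α) =
      ∏ σ : G, ((σ : PGL2 k).toRatFunc - RatFunc.C α) :=
    prod_subgroup_mul_left G hfG (toRatFunc · - RatFunc.C α)
  have hne : ∏ σ : G, ((σ : PGL2 k).toRatFunc - RatFunc.C α) ≠ 0 :=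
    Finset.prod_ne_zero_iff.2 fun σ _ => sub_ne_zero.2 (toRatFunc_ne_C _ α)
  refine mul_right_cancel₀ hne ?_
  calc
    _ = ∏ σ : G, (RatFunc.C c * (σ : PGL2 k).toRatFunc + RatFunc.C d) *
          ((f * σ).toRatFunc - RatFunc.C α) := by rw [Finset.prod_mul_distrib, hshift]
    _ = ∏ σ : G, RatFunc.C (a - c * α) * ((σ : PGL2 k).toRatFunc - RatFunc.C α) := by
      simp only [C_mul_toRatFunc_add_C_mul_toRatFunc_mul_sub_C hf hα]
    _ = _ := by
      rw [Finset.prod_mul_distrib, Finset.prod_const, Finset.card_univ, map_pow,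
        Nat.card_eq_fintype_card]

end PGL2

section

variable {k : Type*} [Field k] {ζ : k} {f : PGL2 k}

theorem prod_toRatFunc_add_one (hζ : ζ ≠ 0)
    (hf : f.toRatFunc = (RatFunc.C (ζ + ζ⁻¹ + 1) * RatFunc.X - 1) / (RatFunc.X + 1))
    (G : Subgroup (PGL2 k)) [Fintype G] (hfG : f ∈ G) :
    ∏ σ : G, ((σ : PGL2 k).toRatFunc + 1) = RatFunc.C ((ζ + 1) ^ Nat.card G) := by
  have hf' : f.toRatFunc = (RatFunc.C (ζ + ζ⁻¹ + 1) * RatFunc.X + RatFunc.C (-1)) /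
      (RatFunc.C 1 * RatFunc.X + RatFunc.C 1) := by
    rw [hf, map_neg, map_one, one_mul, sub_eq_add_neg]
  have hfix : (ζ + ζ⁻¹ + 1) * ζ⁻¹ + -1 = ζ⁻¹ * (1 * ζ⁻¹ + 1) := by
    linear_combination mul_inv_cancel₀ hζ
  have heigen : ζ + ζ⁻¹ + 1 - 1 * ζ⁻¹ = ζ + 1 := by ring
  rw [← heigen, ← PGL2.prod_C_mul_toRatFunc_add_C hf' hfix G hfG]
  simp only [map_one, one_mul]

theorem toRatFunc_add_one_mul_toRatFunc_mul_add_one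
    (hf : f.toRatFunc = (RatFunc.C (ζ + ζ⁻¹ + 1) * RatFunc.X - 1) / (RatFunc.X + 1))
    (σ : PGL2 k) :
    (σ.toRatFunc + 1) * ((f * σ).toRatFunc + 1) =
      RatFunc.C (ζ + ζ⁻¹ + 2) * σ.toRatFunc := by
  rw [PGL2.toRatFunc_mul, hf]
  simp only [map_div₀, map_sub, map_add, map_mul, map_one, map_ofNat, PGL2.substHom_X,
    PGL2.substHom_C]
  rw [mul_add, mul_div_cancel₀ _ σ.toRatFunc_add_one_ne_zero]
  ring

end

theorem prod_orbit_identities_general {k : Type*} [Field k] {ζ : k} (hζ : ζ ≠ 0) {f : PGL2 k}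
    (hf : f.toRatFunc = (RatFunc.C (ζ + ζ⁻¹ + 1) * RatFunc.X - 1) / (RatFunc.X + 1))
    (G : Subgroup (PGL2 k)) [Fintype G] (hfG : f ∈ G) :
    (∏ σ : G, (σ : PGL2 k).toRatFunc) = 1 ∧
      (∏ σ : G, ((σ : PGL2 k).toRatFunc + 1)) = RatFunc.C ((ζ + 1) ^ Nat.card G) := by
  have hplus := prod_toRatFunc_add_one hζ hf G hfG
  have hminus := prod_toRatFunc_add_one (inv_ne_zero hζ) (by rwa [inv_inv, add_comm ζ⁻¹]) G hfG
  have htrace : RatFunc.C (ζ + ζ⁻¹ + 2) ≠ 0 := by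
    refine left_ne_zero_of_mul (b := (1 : PGL2 k).toRatFunc) ?_
    rw [← toRatFunc_add_one_mul_toRatFunc_mul_add_one hf]
    exact mul_ne_zero (PGL2.toRatFunc_add_one_ne_zero _) (PGL2.toRatFunc_add_one_ne_zero _)
  have hfactor : (ζ + 1) * (ζ⁻¹ + 1) = ζ + ζ⁻¹ + 2 := by
    linear_combination mul_inv_cancel₀ hζ
  refine ⟨mul_left_cancel₀ (pow_ne_zero (Nat.card G) htrace) ?_, hplus⟩
  calc
    RatFunc.C (ζ + ζ⁻¹ + 2) ^ Nat.card G * ∏ σ : G, (σ : PGL2 k).toRatFunc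
        = ∏ σ : G, ((σ : PGL2 k).toRatFunc + 1) * ((f * σ).toRatFunc + 1) := by
      simp only [toRatFunc_add_one_mul_toRatFunc_mul_add_one hf, Finset.prod_mul_distrib,
        Finset.prod_const, Finset.card_univ, Nat.card_eq_fintype_card]
    _ = (∏ σ : G, ((σ : PGL2 k).toRatFunc + 1)) * ∏ σ : G, ((σ : PGL2 k).toRatFunc + 1) := by
      rw [Finset.prod_mul_distrib, prod_subgroup_mul_left G hfG (PGL2.toRatFunc · + 1)]
    _ = RatFunc.C ((ζ + 1) ^ Nat.card G) * RatFunc.C ((ζ⁻¹ + 1) ^ Nat.card G) := by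
      rw [← hplus, ← hminus]
    _ = RatFunc.C (ζ + ζ⁻¹ + 2) ^ Nat.card G * 1 := by
      rw [← map_mul, ← mul_pow, hfactor, map_pow, mul_one]

/-- Let `r ≥ 3`, let `ζ` be a primitive `r`-th root of unity, and let `f ∈ PGL₂(ℂ)` be the
homography `z ↦ ((ζ + ζ⁻¹ + 1) z - 1)/(z + 1)`, an element of order `r`.  Let `G = ⟨f⟩`
(cyclic of order `r`) or `G = ⟨f, z ↦ 1/z⟩` (dihedral of order `2r`).  Then the identities
`∏_{σ ∈ G} σ(z) = 1` and `∏_{σ ∈ G} (σ(z) + 1) = (ζ + 1)^#G` hold in `ℂ(z)`. -/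
theorem prod_orbit_identities
    (r : ℕ) (hr : 3 ≤ r) (ζ : ℂ) (hζ : IsPrimitiveRoot ζ r)
    (f w : PGL2 ℂ)
    (hf : PGL2.toRatFunc f =
      (RatFunc.C (ζ + ζ⁻¹ + 1) * RatFunc.X - 1) / (RatFunc.X + 1))
    (hford : orderOf f = r)
    (hw : PGL2.toRatFunc w = 1 / RatFunc.X)
    (G : Subgroup (PGL2 ℂ)) [Fintype G]
    (hG : G = Subgroup.zpowers f ∨ G = Subgroup.closure {f, w}) :
    (∏ σ : G, PGL2.toRatFunc (σ : PGL2 ℂ)) = 1 ∧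
      (∏ σ : G, (PGL2.toRatFunc (σ : PGL2 ℂ) + 1)) =
        RatFunc.C ((ζ + 1) ^ (Nat.card G)) := by
  refine prod_orbit_identities_general (hζ.ne_zero (by lia)) hf G ?_
  rcases hG with rfl | rfl
  · exact Subgroup.mem_zpowers f
  · exact Subgroup.subset_closure (Set.mem_insert f {w})
end
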